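/- arXiv:2512.19605 — 5 statements merged into one kernel-verified Lean document; each statement's English description precedes it below -/
import Mathlib

section
/- Let P be a probability measure on ℝ with characteristic function φ_P(ω) = E_{x~P}[e^{iωx}], let σ > 0 and Q = N(0, σ²) the centered Gaussian measure on ℝ with characteristic function φ_Q(ω) = e^{−σ²ω²/2}, and let γ > 0 with ρ(ω) = (4πγ)^{−1/2} e^{−ω²/(4γ)}. Then ∫_ℝ |φ_P(ω) − φ_Q(ω)|² ρ(ω) dω = E_{x,x'~P⊗P}[e^{−γ(x−x')²}] + E_{y,y'~Q⊗Q}[e^{−γ(y−y')²}] − 2 E_{x~P, y~Q}[e^{−γ(x−y)²}]; that is, the Epps–Pulley functional EP(P) = ∫_ℝ |φ_P(ω) − φ_Q(ω)|² ρ(ω) dω equals the squared maximum mean discrepancy MMD²_{k_γ}(P, N(0,σ²)) for the Gaussian kernel. -/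
open MeasureTheory ProbabilityTheory Real Complex
open scoped ComplexConjugate InnerProductSpace

/-!
The product `φ_μ * conj φ_ν` is the characteristic function of the law of `x - y` under `μ ⊗ ν`,
so by Fubini its integral against a finite measure `ξ` is the mean of `φ_ξ (x - y)` under `μ ⊗ ν`.
Expanding `‖φ_P - φ_Q‖²` into such products turns `∫ ‖φ_P - φ_Q‖² dξ` into the squared maximum mean
discrepancy for the kernel `φ_ξ (x - y)`. The measure with density `ρ` has characteristic function
`exp (-γ ‖t‖²)`, so for it this kernel is the Gaussian one.
-/

section CharFun

variable {E : Type*} [NormedAddCommGroup E] [InnerProductSpace ℝ E] [MeasurableSpace E]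
  [BorelSpace E] [SecondCountableTopology E]
  (μ ν ξ : Measure E) [IsFiniteMeasure μ] [IsFiniteMeasure ν] [IsFiniteMeasure ξ]

lemma integrable_charFun : Integrable (charFun μ) ξ :=
  .of_bound measurable_charFun.aestronglyMeasurable (μ.real Set.univ)
    (.of_forall norm_charFun_le)

lemma integral_charFun_comm : ∫ t, charFun μ t ∂ξ = ∫ x, charFun ξ x ∂μ := by
  have integrable_exp : Integrable (fun p : E × E ↦ cexp (⟪p.2, p.1⟫_ℝ * I)) (ξ.prod μ) :=
    .of_bound (Continuous.aestronglyMeasurable (by fun_prop)) 1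
      (.of_forall fun p ↦ (norm_exp_ofReal_mul_I _).le)
  simp_rw [charFun_apply]
  rw [integral_integral_swap integrable_exp]
  simp_rw [real_inner_comm]

lemma charFun_conv_map_neg (t : E) :
    charFun (μ ∗ ν.map Neg.neg) t = charFun μ t * conj (charFun ν t) := by
  have charFun_map_neg : charFun (ν.map Neg.neg) t = charFun ν (-t) := by
    simpa using charFun_map_smul (μ := ν) (-1) t
  rw [charFun_conv, charFun_map_neg, charFun_neg]

lemma integrable_charFun_mul_conj :
    Integrable (fun t ↦ charFun μ t * conj (charFun ν t)) ξ :=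
  (integrable_charFun (μ ∗ ν.map Neg.neg) ξ).congr (.of_forall (charFun_conv_map_neg μ ν))

lemma integral_charFun_mul_conj :
    ∫ t, charFun μ t * conj (charFun ν t) ∂ξ = ∫ x, ∫ y, charFun ξ (x - y) ∂ν ∂μ := by
  calc ∫ t, charFun μ t * conj (charFun ν t) ∂ξ
    _ = ∫ z, charFun ξ z ∂(μ ∗ ν.map Neg.neg) := by
      simp_rw [← charFun_conv_map_neg, integral_charFun_comm]
    _ = ∫ x, ∫ y, charFun ξ (x + y) ∂(ν.map Neg.neg) ∂μ :=
      integral_conv (integrable_charFun ξ _)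
    _ = ∫ x, ∫ y, charFun ξ (x - y) ∂ν ∂μ := by
      simp_rw [sub_eq_add_neg]
      exact integral_congr_ae (.of_forall fun x ↦
        (MeasurableEquiv.neg E).measurableEmbedding.integral_map _)

lemma integral_re_charFun_mul_conj {κ : E → ℝ} (hκ : ∀ t, charFun ξ t = κ t) :
    ∫ t, (charFun μ t * conj (charFun ν t)).re ∂ξ = ∫ x, ∫ y, κ (x - y) ∂ν ∂μ := by
  have h := integral_charFun_mul_conj μ ν ξ
  simp_rw [hκ, integral_complex_ofReal] at h
  simpa [h] using integral_re (integrable_charFun_mul_conj μ ν ξ)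

end CharFun

/-- The squared maximum mean discrepancy of `P` and `Q` for the kernel `k`, in expanded form. The
expectations over product measures are written as iterated integrals. -/
noncomputable def mmdSq {α : Type*} [MeasurableSpace α] (k : α → α → ℝ) (P Q : Measure α) : ℝ :=
  (∫ x, ∫ x', k x x' ∂P ∂P) + (∫ y, ∫ y', k y y' ∂Q ∂Q) - 2 * ∫ x, ∫ y, k x y ∂Q ∂P

lemma norm_sub_sq_eq_re_mul_conj (z w : ℂ) :
    ‖z - w‖ ^ 2 = (z * conj z).re + (w * conj w).re - 2 * (z * conj w).re := by
  rw [← normSq_eq_norm_sq, normSq_sub, mul_conj, mul_conj, ofReal_re, ofReal_re]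

theorem integral_norm_charFun_sub_sq_eq_mmdSq
    {E : Type*} [NormedAddCommGroup E] [InnerProductSpace ℝ E] [MeasurableSpace E]
    [BorelSpace E] [SecondCountableTopology E]
    (P Q ξ : Measure E) [IsFiniteMeasure P] [IsFiniteMeasure Q] [IsFiniteMeasure ξ]
    {κ : E → ℝ} (hκ : ∀ t, charFun ξ t = κ t) :
    ∫ t, ‖charFun P t - charFun Q t‖ ^ 2 ∂ξ = mmdSq (fun x y ↦ κ (x - y)) P Q := by
  have integrable_re (μ ν : Measure E) [IsFiniteMeasure μ] [IsFiniteMeasure ν] :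
      Integrable (fun t ↦ (charFun μ t * conj (charFun ν t)).re) ξ :=
    (integrable_charFun_mul_conj μ ν ξ).re
  simp_rw [norm_sub_sq_eq_re_mul_conj]
  rw [integral_sub ((integrable_re P P).fun_add (integrable_re Q Q))
      ((integrable_re P Q).const_mul 2),
    integral_add (integrable_re P P) (integrable_re Q Q), integral_const_mul]
  simp_rw [integral_re_charFun_mul_conj _ _ ξ hκ, mmdSq]

lemma ofReal_rpow_neg_mul_cpow {a : ℝ} (ha : 0 < a) (s : ℝ) :
    ((a ^ (-s) : ℝ) : ℂ) * (a : ℂ) ^ (s : ℂ) = 1 := by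
  rw [← ofReal_cpow ha.le, ← ofReal_mul, ← Real.rpow_add ha, neg_add_cancel, Real.rpow_zero,
    ofReal_one]

/-- The Gaussian kernel `k_γ`, with `γ` the factor in the exponent rather than a length scale. -/
noncomputable def gaussianKernel {V : Type*} [SeminormedAddCommGroup V] (γ : ℝ) (x y : V) : ℝ :=
  rexp (-γ * ‖x - y‖ ^ 2)

lemma gaussianKernel_real (γ x y : ℝ) :
    gaussianKernel γ x y = rexp (-γ * (x - y) ^ 2) := by
  simp [gaussianKernel]

section GaussianSpectralDensity

variable {V : Type*} [SeminormedAddCommGroup V] [NormedSpace ℝ V]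

/-- The spectral density `ρ` of the Gaussian kernel `k_γ` on a space of dimension `finrank ℝ V`,
normalized as in Bochner's theorem without a `2π` in the exponent. -/
noncomputable def gaussianSpectralDensity (γ : ℝ) (ω : V) : ℝ :=
  (4 * π * γ) ^ (-(Module.finrank ℝ V : ℝ) / 2) * rexp (-‖ω‖ ^ 2 / (4 * γ))

lemma continuous_gaussianSpectralDensity (γ : ℝ) :
    Continuous (gaussianSpectralDensity γ : V → ℝ) := by
  unfold gaussianSpectralDensity
  fun_prop

lemma gaussianSpectralDensity_nonneg {γ : ℝ} (hγ : 0 ≤ γ) (ω : V) :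
    0 ≤ gaussianSpectralDensity γ ω := by
  unfold gaussianSpectralDensity
  positivity

lemma gaussianSpectralDensity_real (γ ω : ℝ) :
    gaussianSpectralDensity γ ω
      = (4 * π * γ) ^ (-(1 : ℝ) / 2) * rexp (-(ω ^ 2) / (4 * γ)) := by
  simp [gaussianSpectralDensity]

lemma gaussianSpectralDensity_smul_exp {V : Type*} [NormedAddCommGroup V]
    [InnerProductSpace ℝ V] (γ : ℝ) (ω t : V) :
    gaussianSpectralDensity γ ω • cexp (⟪ω, t⟫_ℝ * I)
      = ((4 * π * γ) ^ (-(Module.finrank ℝ V : ℝ) / 2) : ℝ)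
        * cexp (-(4 * γ : ℂ)⁻¹ * ‖ω‖ ^ 2 + I * ⟪t, ω⟫_ℝ) := by
  rw [gaussianSpectralDensity, real_smul, ofReal_mul, mul_assoc, ofReal_exp, ← Complex.exp_add,
    real_inner_comm]
  push_cast
  ring_nf

end GaussianSpectralDensity

section GaussianSpectralMeasure

variable {V : Type*} [NormedAddCommGroup V] [InnerProductSpace ℝ V] [FiniteDimensional ℝ V]
  [MeasurableSpace V] [BorelSpace V]

lemma integrable_gaussianSpectralDensity {γ : ℝ} (hγ : 0 < γ) :
    Integrable (gaussianSpectralDensity γ : V → ℝ) := by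
  have integral_ne_zero : ∫ ω : V, rexp (-(4 * γ)⁻¹ * ‖ω‖ ^ 2) ≠ 0 := by
    rw [GaussianFourier.integral_rexp_neg_mul_sq_norm (by positivity)]
    positivity
  -- A non-integrable function would have Bochner integral `0`.
  have integrable_exp := not_imp_comm.1 integral_undef integral_ne_zero
  unfold gaussianSpectralDensity
  simpa only [neg_mul, neg_div, inv_mul_eq_div] using integrable_exp.const_mul _

/-- The spectral measure of the Gaussian kernel `k_γ`. -/
noncomputable def gaussianSpectralMeasure (V : Type*) [NormedAddCommGroup V]
    [InnerProductSpace ℝ V] [FiniteDimensional ℝ V] [MeasurableSpace V] [BorelSpace V] (γ : ℝ) :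
    Measure V :=
  volume.withDensity fun ω ↦ ENNReal.ofReal (gaussianSpectralDensity γ ω)

lemma isFiniteMeasure_gaussianSpectralMeasure {γ : ℝ} (hγ : 0 < γ) :
    IsFiniteMeasure (gaussianSpectralMeasure V γ) :=
  isFiniteMeasure_withDensity_ofReal (integrable_gaussianSpectralDensity hγ).hasFiniteIntegral

lemma integral_gaussianSpectralMeasure {F : Type*} [NormedAddCommGroup F] [NormedSpace ℝ F]
    {γ : ℝ} (hγ : 0 ≤ γ) (f : V → F) :
    ∫ ω, f ω ∂gaussianSpectralMeasure V γ = ∫ ω, gaussianSpectralDensity γ ω • f ω := by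
  rw [gaussianSpectralMeasure, integral_withDensity_eq_integral_toReal_smul
    (continuous_gaussianSpectralDensity γ).measurable.ennreal_ofReal
    (.of_forall fun _ ↦ ENNReal.ofReal_lt_top)]
  simp_rw [ENNReal.toReal_ofReal (gaussianSpectralDensity_nonneg hγ _)]

lemma charFun_gaussianSpectralMeasure {γ : ℝ} (hγ : 0 < γ) (t : V) :
    charFun (gaussianSpectralMeasure V γ) t = rexp (-γ * ‖t‖ ^ 2) := by
  have hb : 0 < ((4 * γ : ℂ)⁻¹).re := by
    rw [← ofReal_ofNat, ← ofReal_mul, ← ofReal_inv, ofReal_re]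
    positivity
  have normalization : (((4 * π * γ) ^ (-(Module.finrank ℝ V : ℝ) / 2) : ℝ) : ℂ)
      * (π / (4 * γ : ℂ)⁻¹) ^ (Module.finrank ℝ V / 2 : ℂ) = 1 := by
    have base_eq : π / (4 * γ : ℂ)⁻¹ = (4 * π * γ : ℝ) := by
      push_cast
      rw [div_inv_eq_mul]
      ring
    have rpow_mul_cpow := ofReal_rpow_neg_mul_cpow (show 0 < 4 * π * γ by positivity)
      (Module.finrank ℝ V / 2)
    rwa [base_eq, neg_div, ← ofReal_natCast, ← ofReal_ofNat, ← ofReal_div]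
  have exponent_eq : I ^ 2 * ‖t‖ ^ 2 / (4 * (4 * γ : ℂ)⁻¹) = (-γ * ‖t‖ ^ 2 : ℝ) := by
    push_cast
    rw [I_sq]
    field_simp
  rw [charFun_apply, integral_gaussianSpectralMeasure hγ.le]
  simp_rw [gaussianSpectralDensity_smul_exp]
  rw [integral_const_mul, GaussianFourier.integral_cexp_neg_mul_sq_norm_add hb, ← mul_assoc,
    normalization, one_mul, exponent_eq, ofReal_exp]

theorem epps_pulley_is_mmd_general (P Q : Measure V) [IsFiniteMeasure P] [IsFiniteMeasure Q]
    {γ : ℝ} (hγ : 0 < γ) :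
    ∫ ω, ‖charFun P ω - charFun Q ω‖ ^ 2 * gaussianSpectralDensity γ ω
      = mmdSq (gaussianKernel γ) P Q := by
  have := isFiniteMeasure_gaussianSpectralMeasure (V := V) hγ
  calc ∫ ω, ‖charFun P ω - charFun Q ω‖ ^ 2 * gaussianSpectralDensity γ ω
    _ = ∫ ω, ‖charFun P ω - charFun Q ω‖ ^ 2 ∂gaussianSpectralMeasure V γ := by
      simp_rw [integral_gaussianSpectralMeasure hγ.le, smul_eq_mul, mul_comm]
    _ = mmdSq (gaussianKernel γ) P Q :=
      integral_norm_charFun_sub_sq_eq_mmdSq P Q _ (charFun_gaussianSpectralMeasure hγ)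

end GaussianSpectralMeasure

lemma charFun_eq_integral_exp_I_mul (μ : Measure ℝ) (ω : ℝ) :
    charFun μ ω = ∫ x : ℝ, cexp (I * ω * x) ∂μ := by
  simp_rw [charFun_apply_real, mul_comm I, mul_right_comm]

lemma charFun_gaussianReal_zero (v : NNReal) (ω : ℝ) :
    charFun (gaussianReal 0 v) ω = rexp (-(v * ω ^ 2) / 2) := by
  simp [charFun_gaussianReal, neg_div]

/-- **Epps–Pulley functional = squared Gaussian-kernel MMD.**
For a probability measure `P` on `ℝ`, the Gaussian prior `Q = N(0, σ²)` with
characteristic function `φ_Q(ω) = exp(−σ²ω²/2)`, and the Gaussian spectral density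
`ρ(ω) = (4πγ)^{−1/2} exp(−ω²/(4γ))`, the integral
`∫ |φ_P(ω) − φ_Q(ω)|² ρ(ω) dω` equals the expanded-form squared MMD
`E_{P⊗P}[e^{−γ(x−x')²}] + E_{Q⊗Q}[e^{−γ(y−y')²}] − 2 E_{P⊗Q}[e^{−γ(x−y)²}]`. -/
theorem epps_pulley_is_mmd
    (P : Measure ℝ) [IsProbabilityMeasure P] (σ γ : ℝ) (hσ : 0 < σ) (hγ : 0 < γ) :
    (∫ ω : ℝ,
      ‖(∫ x : ℝ, Complex.exp (Complex.I * (ω : ℂ) * (x : ℂ)) ∂P)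
          - (Real.exp (-(σ ^ 2 * ω ^ 2) / 2) : ℂ)‖ ^ 2
        * ((4 * Real.pi * γ) ^ (-(1 : ℝ) / 2) * Real.exp (-(ω ^ 2) / (4 * γ))))
    = (∫ x : ℝ, ∫ x' : ℝ, Real.exp (-γ * (x - x') ^ 2) ∂P ∂P)
      + (∫ y : ℝ, ∫ y' : ℝ, Real.exp (-γ * (y - y') ^ 2)
          ∂(gaussianReal 0 ⟨σ ^ 2, sq_nonneg σ⟩) ∂(gaussianReal 0 ⟨σ ^ 2, sq_nonneg σ⟩))
      - 2 * ∫ x : ℝ, ∫ y : ℝ, Real.exp (-γ * (x - y) ^ 2)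
          ∂(gaussianReal 0 ⟨σ ^ 2, sq_nonneg σ⟩) ∂P := by
  -- Instance search on `gaussianReal 0 v` fails when `v` is the anonymous constructor itself;
  -- `(v : ℝ)` unfolds to `σ ^ 2` in the last step.
  let v : NNReal := ⟨σ ^ 2, sq_nonneg σ⟩
  have h := epps_pulley_is_mmd_general P (gaussianReal 0 v) hγ
  simp only [charFun_eq_integral_exp_I_mul P, charFun_gaussianReal_zero,
    gaussianSpectralDensity_real, gaussianKernel_real, mmdSq] at h
  exact h
end

section
/- Let P be a probability measure on ℝ^d, let s : ℝ^d → ℝ^d be a measurable function (the score of the target), and let ρ : ℝ^d → [0, ∞) be measurable. Assume the integrability condition ∫∫∫ (‖s(x)‖ + ‖ω‖)(‖s(x')‖ + ‖ω‖) ρ(ω) dω dP(x) dP(x') < ∞. Then ∫_{ℝ^d} ∫_{ℝ^d} [ ∫_{ℝ^d} ⟨ s(x) + iω, conj(s(x') + iω) ⟩_{ℂ^d} e^{iω·(x − x')} ρ(ω) dω ] dP(x) dP(x') = ∫_{ℝ^d} ‖ ∫_{ℝ^d} (s(x) + iω) e^{iω·x} dP(x) ‖²_{ℂ^d} ρ(ω)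 dω. (This is the spectral representation of the squared kernel Stein discrepancy: for a shift-invariant kernel k with spectral density ρ_k, the left-hand side equals E_{x,x'~P⊗P}[k_stein(x,x')] = KSD²_k(P, Q) for a target Q with score s.) -/
open MeasureTheory Real Complex

/-!
Put `g_j(x, ω) = (s(x)_j + i ω_j) e^{iω·x}`. Since `e^{iω·(x - x')} = e^{iω·x} conj(e^{iω·x'})`, the
integrand on the left is `∑_j g_j(x, ω) conj(g_j(x', ω)) ρ(ω)`. As `|g_j(x, ω)| ≤ ‖s(x)‖ + ‖ω‖`, the
moment condition makes each summand integrable in `(x, x', ω)`, so `ω` may be integrated last. For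
fixed `ω` the integral over `(x, x')` factors as `(∫ g_j dP) conj(∫ g_j dP) = |∫ g_j dP|²`; Bochner
integrals factor in this way even if `g_j(·, ω)` is not integrable.
-/

open scoped ComplexConjugate

section TripleIntegrals

variable {X Y Ω : Type*} [MeasurableSpace X] [MeasurableSpace Y] [MeasurableSpace Ω]
  {μ : Measure X} {μ' : Measure Y} {ν : Measure Ω} [SFinite μ'] [SFinite ν]

lemma integrable_prod_prod_of_lintegral_lt_top {G : (X × Y) × Ω → ℝ} (hG : Measurable G)
    (hG_nonneg : ∀ p, 0 ≤ G p)
    (hG_fin : ∫⁻ x, ∫⁻ y, ∫⁻ ω, ENNReal.ofReal (G ((x, y), ω)) ∂ν ∂μ' ∂μ < ⊤) :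
    Integrable G ((μ.prod μ').prod ν) := by
  refine ⟨hG.aestronglyMeasurable, ?_⟩
  have hG_ofReal : Measurable fun p => ENNReal.ofReal (G p) := hG.ennreal_ofReal
  rwa [hasFiniteIntegral_iff_ofReal (.of_forall hG_nonneg),
    lintegral_prod _ hG_ofReal.aemeasurable,
    lintegral_prod _ hG_ofReal.lintegral_prod_right'.aemeasurable]

lemma integral_integral_integral_eq_integral_integral_prod {E : Type*} [NormedAddCommGroup E]
    [NormedSpace ℝ E] [SFinite μ] {F : (X × Y) × Ω → E}
    (hF : Integrable F ((μ.prod μ').prod ν)) :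
    ∫ x, ∫ y, ∫ ω, F ((x, y), ω) ∂ν ∂μ' ∂μ = ∫ ω, ∫ z, F (z, ω) ∂(μ.prod μ') ∂ν :=
  calc ∫ x, ∫ y, ∫ ω, F ((x, y), ω) ∂ν ∂μ' ∂μ
      = ∫ z, ∫ ω, F (z, ω) ∂ν ∂(μ.prod μ') := (integral_prod _ hF.integral_prod_left).symm
    _ = ∫ ω, ∫ z, F (z, ω) ∂(μ.prod μ') ∂ν := integral_integral_swap hF

end TripleIntegrals

section Gram

variable {𝕜 X Ω ι : Type*} [RCLike 𝕜] [MeasurableSpace X] [MeasurableSpace Ω] [Fintype ι]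
  {μ : Measure X} {ν : Measure Ω} [SFinite μ] [SFinite ν]

lemma integral_prod_mul_conj (f : X → 𝕜) :
    ∫ z, f z.1 * conj (f z.2) ∂(μ.prod μ) = ((‖∫ x, f x ∂μ‖ ^ 2 : ℝ) : 𝕜) := by
  rw [integral_prod_mul f fun x => conj (f x), integral_conj, RCLike.mul_conj, RCLike.ofReal_pow]

lemma integral_prod_sum_mul_conj_mul_ofReal {f : ι → X → 𝕜} {r : ℝ}
    (hf : ∀ j, Integrable (fun z : X × X => f j z.1 * conj (f j z.2) * (r : 𝕜)) (μ.prod μ)) :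
    ∫ z, (∑ j, f j z.1 * conj (f j z.2)) * (r : 𝕜) ∂(μ.prod μ)
      = (((∑ j, ‖∫ x, f j x ∂μ‖ ^ 2) * r : ℝ) : 𝕜) := by
  simp only [Finset.sum_mul]
  rw [integral_finsetSum _ fun j _ => hf j]
  simp only [integral_mul_const, integral_prod_mul_conj, RCLike.ofReal_sum, RCLike.ofReal_mul]

theorem integral_sum_mul_conj_eq_integral_sum_norm_sq {g : ι → X → Ω → 𝕜} {ρ : Ω → ℝ}
    (hg : ∀ j, Integrable
      (fun p : (X × X) × Ω => g j p.1.1 p.2 * conj (g j p.1.2 p.2) * (ρ p.2 : 𝕜))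
      ((μ.prod μ).prod ν)) :
    ∫ x, ∫ x', ∫ ω, (∑ j, g j x ω * conj (g j x' ω)) * (ρ ω : 𝕜) ∂ν ∂μ ∂μ
      = ((∫ ω, (∑ j, ‖∫ x, g j x ω ∂μ‖ ^ 2) * ρ ω ∂ν : ℝ) : 𝕜) := by
  have hg_ae : ∀ᵐ ω ∂ν, ∀ j, Integrable
      (fun z : X × X => g j z.1 ω * conj (g j z.2 ω) * (ρ ω : 𝕜)) (μ.prod μ) :=
    ae_all_iff.2 fun j => (hg j).prod_left_ae
  have hg_sum : Integrable
      (fun p : (X × X) × Ω => (∑ j, g j p.1.1 p.2 * conj (g j p.1.2 p.2)) * (ρ p.2 : 𝕜))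
      ((μ.prod μ).prod ν) := by
    simpa only [Finset.sum_mul] using integrable_finsetSum Finset.univ fun j _ => hg j
  rw [integral_integral_integral_eq_integral_integral_prod hg_sum, ← integral_ofReal]
  refine integral_congr_ae ?_
  filter_upwards [hg_ae] with ω hω using
    integral_prod_sum_mul_conj_mul_ofReal (f := fun j x => g j x ω) hω

end Gram

section SteinFeature

variable {ι : Type*} [Fintype ι] {s : EuclideanSpace ℝ ι → EuclideanSpace ℝ ι}

/-- The `j`-th coordinate of the Stein feature `(s(x) + iω) e^{iω·x}`, the Stein operator with
score `s` applied to the plane wave of frequency `ω`. -/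
noncomputable def steinFeature (s : EuclideanSpace ℝ ι → EuclideanSpace ℝ ι) (j : ι)
    (x ω : EuclideanSpace ℝ ι) : ℂ :=
  ((s x j : ℂ) + I * (ω j : ℂ)) * exp (I * ((∑ i, ω i * x i : ℝ) : ℂ))

@[fun_prop]
lemma measurable_steinFeature {α : Type*} [MeasurableSpace α] {u v : α → EuclideanSpace ℝ ι}
    (hs : Measurable s) (j : ι) (hu : Measurable u) (hv : Measurable v) :
    Measurable fun a => steinFeature s j (u a) (v a) := by
  unfold steinFeature
  fun_prop

lemma norm_steinFeature_le (s : EuclideanSpace ℝ ι → EuclideanSpace ℝ ι) (j : ι)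
    (x ω : EuclideanSpace ℝ ι) : ‖steinFeature s j x ω‖ ≤ ‖s x‖ + ‖ω‖ :=
  calc ‖steinFeature s j x ω‖
      = ‖(s x j : ℂ) + I * (ω j : ℂ)‖ := by
        rw [steinFeature, norm_mul, norm_exp_I_mul_ofReal, mul_one]
    _ ≤ ‖s x j‖ + ‖ω j‖ := by
        simpa only [norm_mul, norm_I, one_mul, norm_real] using norm_add_le (s x j : ℂ) (I * ω j)
    _ ≤ ‖s x‖ + ‖ω‖ := add_le_add (PiLp.norm_apply_le _ j) (PiLp.norm_apply_le _ j)

lemma exp_I_mul_sum_sub (ω x x' : ι → ℝ) :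
    exp (I * ((∑ i, ω i * (x i - x' i) : ℝ) : ℂ))
      = exp (I * ((∑ i, ω i * x i : ℝ) : ℂ)) * conj (exp (I * ((∑ i, ω i * x' i : ℝ) : ℂ))) := by
  rw [← exp_conj, ← Complex.exp_add, map_mul, conj_I, conj_ofReal]
  simp only [mul_sub, Finset.sum_sub_distrib, ofReal_sub, neg_mul, ← sub_eq_add_neg]

lemma sum_steinFeature_mul_conj (s : EuclideanSpace ℝ ι → EuclideanSpace ℝ ι)
    (x x' ω : EuclideanSpace ℝ ι) :
    ∑ j, steinFeature s j x ω * conj (steinFeature s j x' ω)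
      = (∑ j, ((s x j : ℂ) + I * (ω j : ℂ)) * conj ((s x' j : ℂ) + I * (ω j : ℂ)))
          * exp (I * ((∑ i, ω i * (x i - x' i) : ℝ) : ℂ)) := by
  rw [exp_I_mul_sum_sub, Finset.sum_mul]
  refine Finset.sum_congr rfl fun j _ => ?_
  rw [steinFeature, steinFeature, map_mul]
  ring

variable {P ν : Measure (EuclideanSpace ℝ ι)} [SFinite P] [SFinite ν] {ρ : EuclideanSpace ℝ ι → ℝ}

lemma integrable_steinFeature_mul_conj (hs : Measurable s) (hρ : Measurable ρ)
    (hρ0 : ∀ ω, 0 ≤ ρ ω)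
    (hint : ∫⁻ x, ∫⁻ x', ∫⁻ ω,
      ENNReal.ofReal ((‖s x‖ + ‖ω‖) * (‖s x'‖ + ‖ω‖) * ρ ω) ∂ν ∂P ∂P < ⊤) (j : ι) :
    Integrable (fun p : (EuclideanSpace ℝ ι × EuclideanSpace ℝ ι) × EuclideanSpace ℝ ι =>
        steinFeature s j p.1.1 p.2 * conj (steinFeature s j p.1.2 p.2) * (ρ p.2 : ℂ))
      ((P.prod P).prod ν) := by
  have hbound : Integrable
      (fun p : (EuclideanSpace ℝ ι × EuclideanSpace ℝ ι) × EuclideanSpace ℝ ι =>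
        (‖s p.1.1‖ + ‖p.2‖) * (‖s p.1.2‖ + ‖p.2‖) * ρ p.2) ((P.prod P).prod ν) :=
    integrable_prod_prod_of_lintegral_lt_top (by fun_prop)
      (fun p => mul_nonneg (by positivity) (hρ0 p.2)) hint
  have hconj : Measurable (conj : ℂ → ℂ) := continuous_conj.measurable
  refine hbound.mono' (by fun_prop) (.of_forall fun p => ?_)
  rw [norm_mul, norm_mul, RCLike.norm_conj, norm_real, Real.norm_of_nonneg (hρ0 _)]
  have hρp : 0 ≤ ρ p.2 := hρ0 p.2
  gcongr <;> exact norm_steinFeature_le ..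

theorem ksd_spectral_representation_general (hs : Measurable s) (hρ : Measurable ρ)
    (hρ0 : ∀ ω, 0 ≤ ρ ω)
    (hint : ∫⁻ x, ∫⁻ x', ∫⁻ ω,
      ENNReal.ofReal ((‖s x‖ + ‖ω‖) * (‖s x'‖ + ‖ω‖) * ρ ω) ∂ν ∂P ∂P < ⊤) :
    ∫ x, ∫ x', ∫ ω,
        (∑ j, ((s x j : ℂ) + I * (ω j : ℂ)) * conj ((s x' j : ℂ) + I * (ω j : ℂ)))
          * exp (I * ((∑ i, ω i * (x i - x' i) : ℝ) : ℂ)) * (ρ ω : ℂ) ∂ν ∂P ∂P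
      = ((∫ ω, (∑ j, ‖∫ x, ((s x j : ℂ) + I * (ω j : ℂ))
            * exp (I * ((∑ i, ω i * x i : ℝ) : ℂ)) ∂P‖ ^ 2) * ρ ω ∂ν : ℝ) : ℂ) := by
  simp only [← sum_steinFeature_mul_conj]
  exact integral_sum_mul_conj_eq_integral_sum_norm_sq
    (integrable_steinFeature_mul_conj hs hρ hρ0 hint)

end SteinFeature

/-- **Spectral representation of the squared kernel Stein discrepancy.**
For a probability measure `P` on `ℝ^d`, a measurable score `s : ℝ^d → ℝ^d`, and a measurable
nonnegative spectral density `ρ`, under the stated integrability condition,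
`∫∫ [∫ ⟨s(x)+iω, conj(s(x')+iω)⟩ e^{iω·(x−x')} ρ(ω) dω] dP(x) dP(x')
  = ∫ ‖∫ (s(x)+iω) e^{iω·x} dP(x)‖² ρ(ω) dω`,
where the bilinear pairing, conjugation and Hermitian norm on `ℂ^d` are written out
coordinatewise. -/
theorem ksd_spectral_representation
    (d : ℕ) (P : Measure (EuclideanSpace ℝ (Fin d))) [IsProbabilityMeasure P]
    (s : EuclideanSpace ℝ (Fin d) → EuclideanSpace ℝ (Fin d)) (hs : Measurable s)
    (ρ : EuclideanSpace ℝ (Fin d) → ℝ) (hρ : Measurable ρ) (hρ0 : ∀ ω, 0 ≤ ρ ω)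
    (hint : (∫⁻ x, ∫⁻ x', ∫⁻ ω,
        ENNReal.ofReal ((‖s x‖ + ‖ω‖) * (‖s x'‖ + ‖ω‖) * ρ ω) ∂volume ∂P ∂P) < ⊤) :
    (∫ x, ∫ x', (∫ ω,
        (∑ j : Fin d, ((s x j : ℂ) + Complex.I * (ω j : ℂ))
            * (starRingEnd ℂ) ((s x' j : ℂ) + Complex.I * (ω j : ℂ)))
          * Complex.exp (Complex.I * ((∑ i : Fin d, ω i * (x i - x' i) : ℝ) : ℂ))
          * (ρ ω : ℂ) ∂volume) ∂P ∂P)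
    = ((∫ ω, (∑ j : Fin d,
          ‖∫ x, ((s x j : ℂ) + Complex.I * (ω j : ℂ))
              * Complex.exp (Complex.I * ((∑ i : Fin d, ω i * x i : ℝ) : ℂ)) ∂P‖ ^ 2)
          * ρ ω ∂volume : ℝ) : ℂ) :=
  ksd_spectral_representation_general hs hρ hρ0 hint
end

section
/- Let d ≥ 2, c ∈ ℝ, and let σ_{d−1} denote the surface measure on the unit sphere S^{d−1} ⊂ ℝ^d. Let e₁ be the first standard basis vector of ℝ^d, and let u, v ∈ ℝ^d be orthogonal to e₁. Then ∫_{S^{d−1}} (θ·u)(θ·v) exp(−c θ₁²) dσ_{d−1}(θ) = (u·v) · (J₁(c) − J₂(c)) / (d − 1), where J₁(c) = ∫_{S^{d−1}} exp(−c θ₁²) dσ_{d−1}(θ) and J₂(c) = ∫_{S^{d−1}} θ₁² exp(−c θ₁²) dσ_{d−1}(θ). -/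
/-!
For a weight `w` on `ℝ` and a unit vector `e`, the second moments
`M(u, v) = ∫ ⟨u, θ⟩ ⟨v, θ⟩ w(⟨e, θ⟩) dσ(θ)` are invariant under the linear isometries fixing `e`.
Let `u ⟂ e`. The reflection along `u` fixes `e` and every `v ⟂ u`, so `M(u, v) = 0` for these `v`,
and hence `‖u‖² M(u, v) = ⟨u, v⟩ M(u, u)` for all `v`. The reflection along `u - u'` exchanges
`u` and any `u' ⟂ e` of the same norm, so `M(u, u)` depends only on `‖u‖`. Its value comes from an
orthonormal basis containing `e`: the diagonal moments add up to `∫ w(⟨e, θ⟩) dσ(θ)` because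
`‖θ‖ = 1`.
-/

open MeasureTheory Real

/-- The (unnormalized) surface measure on the unit sphere `S^{d−1} ⊂ ℝ^d`. -/
noncomputable def sphereSurfaceMeasure (d : ℕ) :
    Measure (Metric.sphere (0 : EuclideanSpace ℝ (Fin d)) 1) :=
  (volume : Measure (EuclideanSpace ℝ (Fin d))).toSphere

/-- `J₁(c) = ∫_{S^{d−1}} exp(−c θ₁²) dσ_{d−1}(θ)`. -/
noncomputable def J1 (d : ℕ) (hd : 2 ≤ d) (c : ℝ) : ℝ :=
  ∫ θ : Metric.sphere (0 : EuclideanSpace ℝ (Fin d)) 1,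
    Real.exp (-c * ((θ : EuclideanSpace ℝ (Fin d)) ⟨0, by omega⟩) ^ 2)
    ∂(sphereSurfaceMeasure d)

/-- `J₂(c) = ∫_{S^{d−1}} θ₁² exp(−c θ₁²) dσ_{d−1}(θ)`. -/
noncomputable def J2 (d : ℕ) (hd : 2 ≤ d) (c : ℝ) : ℝ :=
  ∫ θ : Metric.sphere (0 : EuclideanSpace ℝ (Fin d)) 1,
    ((θ : EuclideanSpace ℝ (Fin d)) ⟨0, by omega⟩) ^ 2
      * Real.exp (-c * ((θ : EuclideanSpace ℝ (Fin d)) ⟨0, by omega⟩) ^ 2)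
    ∂(sphereSurfaceMeasure d)

open Metric Module
open scoped InnerProductSpace Pointwise

section Isometry

variable {E F : Type*} [NormedAddCommGroup E] [NormedSpace ℝ E]
  [NormedAddCommGroup F] [NormedSpace ℝ F]

/-- The homeomorphism between unit spheres induced by a linear isometry equivalence. -/
def unitSphereHomeomorph (L : E ≃ₗᵢ[ℝ] F) : sphere (0 : E) 1 ≃ₜ sphere (0 : F) 1 :=
  L.toHomeomorph.subtype fun _ => by simp

@[simp]
lemma coe_unitSphereHomeomorph_symm (L : E ≃ₗᵢ[ℝ] F) (θ : sphere (0 : F) 1) :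
    ((unitSphereHomeomorph L).symm θ : E) = L.symm θ := rfl

lemma smul_image_coe_preimage_unitSphereHomeomorph (L : E ≃ₗᵢ[ℝ] F) (I : Set ℝ)
    (s : Set (sphere (0 : F) 1)) :
    I • ((↑) '' (unitSphereHomeomorph L ⁻¹' s) : Set E) = L ⁻¹' (I • ((↑) '' s)) := by
  have hcoe : ((↑) '' (unitSphereHomeomorph L ⁻¹' s) : Set E) = L.symm '' ((↑) '' s) := by
    simp only [← Homeomorph.image_symm, Set.image_image, coe_unitSphereHomeomorph_symm]
  have hpre : L ⁻¹' (I • ((↑) '' s)) = L.symm '' (I • ((↑) '' s)) :=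
    (L.symm.toEquiv.image_eq_preimage_symm _).symm
  rw [hcoe, hpre, ← Set.image2_smul, ← Set.image2_smul,
    Set.image_image2_distrib_right fun r x => L.symm.map_smul r x]

-- `μ.toSphere s` is `dim E` times the `μ`-measure of the cone over `s`, and linear maps preserve
-- cones.
lemma measurePreserving_unitSphereHomeomorph [MeasurableSpace E] [BorelSpace E]
    [MeasurableSpace F] [BorelSpace F] {μ : Measure E} {ν : Measure F} (L : E ≃ₗᵢ[ℝ] F)
    (hL : MeasurePreserving L μ ν) :
    MeasurePreserving (unitSphereHomeomorph L) μ.toSphere ν.toSphere := by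
  have hmeas : Measurable (unitSphereHomeomorph L) := (unitSphereHomeomorph L).measurable
  refine ⟨hmeas, Measure.ext fun s hs => ?_⟩
  rw [Measure.map_apply hmeas hs, Measure.toSphere_apply' _ (hmeas hs),
    Measure.toSphere_apply' _ hs, smul_image_coe_preimage_unitSphereHomeomorph,
    hL.measure_preimage_emb L.toHomeomorph.measurableEmbedding, L.toLinearEquiv.finrank_eq]

end Isometry

section InnerProductSpace

variable {E : Type*} [NormedAddCommGroup E] [InnerProductSpace ℝ E]

lemma reflection_orthogonal_span_singleton_eq_self {u v : E} (h : ⟪u, v⟫_ℝ = 0) :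
    (ℝ ∙ u)ᗮ.reflection v = v :=
  Submodule.reflection_mem_subspace_eq_self (Submodule.mem_orthogonal_singleton_iff_inner_right.2 h)

lemma exists_orthonormalBasis_apply_eq [FiniteDimensional ℝ E] {e : E} (he : ‖e‖ = 1) :
    ∃ (s : Finset E) (b : OrthonormalBasis s ℝ E) (i : s), b i = e := by
  have horth : Orthonormal ℝ ((↑) : ({e} : Set E) → E) :=
    ⟨by simpa using he, fun i j hij => (hij (Subsingleton.elim i j)).elim⟩
  obtain ⟨s, b, hes, hb⟩ := horth.exists_orthonormalBasis_extension
  exact ⟨s, b, ⟨e, hes rfl⟩, congrFun hb _⟩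

end InnerProductSpace

section ZonalSecondMoment

variable {E : Type*} [NormedAddCommGroup E] [InnerProductSpace ℝ E] [FiniteDimensional ℝ E]
  [MeasurableSpace E] [BorelSpace E] {w : ℝ → ℝ} {e u v : E}

lemma integral_unitSphere_comp_linearIsometryEquiv {G : Type*} [NormedAddCommGroup G]
    [NormedSpace ℝ G] (L : E ≃ₗᵢ[ℝ] E) (f : E → G) :
    ∫ θ : sphere (0 : E) 1, f (L θ) ∂volume.toSphere =
      ∫ θ : sphere (0 : E) 1, f θ ∂volume.toSphere :=
  (measurePreserving_unitSphereHomeomorph L L.measurePreserving).integral_comp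
    (unitSphereHomeomorph L).measurableEmbedding fun θ => f θ

/-- The second moment `∫ ⟨u, θ⟩ ⟨v, θ⟩ w(⟨e, θ⟩) dσ(θ)` of the surface measure on the unit sphere,
weighted by the zonal function with profile `w` and axis `e`. -/
noncomputable def zonalSecondMoment (w : ℝ → ℝ) (e u v : E) : ℝ :=
  ∫ θ : sphere (0 : E) 1, ⟪u, θ⟫_ℝ * ⟪v, θ⟫_ℝ * w ⟪e, θ⟫_ℝ ∂volume.toSphere

lemma zonalSecondMoment_map (L : E ≃ₗᵢ[ℝ] E) (w : ℝ → ℝ) (e u v : E) :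
    zonalSecondMoment w (L e) (L u) (L v) = zonalSecondMoment w e u v := by
  have h := integral_unitSphere_comp_linearIsometryEquiv L
    fun x => ⟪L u, x⟫_ℝ * ⟪L v, x⟫_ℝ * w ⟪L e, x⟫_ℝ
  simpa only [zonalSecondMoment, L.inner_map_map] using h.symm

@[simp]
lemma zonalSecondMoment_smul_left (w : ℝ → ℝ) (e : E) (r : ℝ) (u v : E) :
    zonalSecondMoment w e (r • u) v = r * zonalSecondMoment w e u v := by
  simp only [zonalSecondMoment, real_inner_smul_left, mul_assoc, integral_const_mul]

@[simp]
lemma zonalSecondMoment_smul_right (w : ℝ → ℝ) (e u : E) (r : ℝ) (v : E) :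
    zonalSecondMoment w e u (r • v) = r * zonalSecondMoment w e u v := by
  simp only [zonalSecondMoment, real_inner_smul_left, mul_assoc, mul_left_comm _ r,
    integral_const_mul]

lemma integrable_zonal_of_continuous (hw : Continuous w) (e : E) :
    Integrable (fun θ : sphere (0 : E) 1 => w ⟪e, θ⟫_ℝ) volume.toSphere :=
  (by fun_prop : Continuous _).integrable_of_hasCompactSupport (.of_compactSpace _)

lemma integrable_inner_mul_inner_mul_zonal
    (hw : Integrable (fun θ : sphere (0 : E) 1 => w ⟪e, θ⟫_ℝ) volume.toSphere) (u v : E) :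
    Integrable (fun θ : sphere (0 : E) 1 => ⟪u, θ⟫_ℝ * ⟪v, θ⟫_ℝ * w ⟪e, θ⟫_ℝ)
      volume.toSphere := by
  refine hw.bdd_mul (c := ‖u‖ * ‖v‖) (by fun_prop) (.of_forall fun θ => ?_)
  have hbound (x : E) : ‖⟪x, (θ : E)⟫_ℝ‖ ≤ ‖x‖ := by simpa using norm_inner_le_norm (𝕜 := ℝ) x θ
  rw [norm_mul]
  gcongr <;> exact hbound _

lemma zonalSecondMoment_sub_right
    (hw : Integrable (fun θ : sphere (0 : E) 1 => w ⟪e, θ⟫_ℝ) volume.toSphere) (u v v' : E) :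
    zonalSecondMoment w e u (v - v') = zonalSecondMoment w e u v - zonalSecondMoment w e u v' := by
  simp only [zonalSecondMoment, inner_sub_left, mul_sub, sub_mul]
  exact integral_sub (integrable_inner_mul_inner_mul_zonal hw u v)
    (integrable_inner_mul_inner_mul_zonal hw u v')

lemma zonalSecondMoment_eq_zero_of_inner_eq_zero (w : ℝ → ℝ) (hue : ⟪u, e⟫_ℝ = 0)
    (huv : ⟪u, v⟫_ℝ = 0) : zonalSecondMoment w e u v = 0 := by
  have h := zonalSecondMoment_map (ℝ ∙ u)ᗮ.reflection w e u v
  rw [reflection_orthogonal_span_singleton_eq_self hue,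
    reflection_orthogonal_span_singleton_eq_self huv,
    Submodule.reflection_orthogonalComplement_singleton_eq_neg, ← neg_one_smul ℝ u,
    zonalSecondMoment_smul_left] at h
  linarith

lemma zonalSecondMoment_self_eq_of_norm_eq (w : ℝ → ℝ) (hue : ⟪u, e⟫_ℝ = 0)
    (hve : ⟪v, e⟫_ℝ = 0) (h : ‖u‖ = ‖v‖) :
    zonalSecondMoment w e u u = zonalSecondMoment w e v v := by
  have hfix : (ℝ ∙ (u - v))ᗮ.reflection e = e :=
    reflection_orthogonal_span_singleton_eq_self (by rw [inner_sub_left, hue, hve, sub_zero])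
  have hmap := zonalSecondMoment_map (ℝ ∙ (u - v))ᗮ.reflection w e u u
  rwa [hfix, Submodule.reflection_sub h, eq_comm] at hmap

lemma norm_sq_mul_zonalSecondMoment
    (hw : Integrable (fun θ : sphere (0 : E) 1 => w ⟪e, θ⟫_ℝ) volume.toSphere)
    (hue : ⟪u, e⟫_ℝ = 0) (v : E) :
    ‖u‖ ^ 2 * zonalSecondMoment w e u v = ⟪u, v⟫_ℝ * zonalSecondMoment w e u u := by
  have horth : ⟪u, ‖u‖ ^ 2 • v - ⟪u, v⟫_ℝ • u⟫_ℝ = 0 := by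
    rw [inner_sub_right, real_inner_smul_right, real_inner_smul_right, real_inner_self_eq_norm_sq]
    ring
  have hzero := zonalSecondMoment_eq_zero_of_inner_eq_zero w hue horth
  rwa [zonalSecondMoment_sub_right hw, zonalSecondMoment_smul_right, zonalSecondMoment_smul_right,
    sub_eq_zero] at hzero

lemma sum_zonalSecondMoment_orthonormalBasis {ι : Type*} [Fintype ι]
    (hw : Integrable (fun θ : sphere (0 : E) 1 => w ⟪e, θ⟫_ℝ) volume.toSphere)
    (b : OrthonormalBasis ι ℝ E) :
    ∑ i, zonalSecondMoment w e (b i) (b i) =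
      ∫ θ : sphere (0 : E) 1, w ⟪e, θ⟫_ℝ ∂volume.toSphere := by
  simp only [zonalSecondMoment]
  rw [← integral_finsetSum _ fun i _ => integrable_inner_mul_inner_mul_zonal hw (b i) (b i)]
  refine integral_congr_ae (.of_forall fun θ => ?_)
  simp only [← Finset.sum_mul, ← pow_two, b.sum_sq_inner_right, norm_eq_of_mem_sphere, one_pow,
    one_mul]

lemma finrank_sub_one_mul_zonalSecondMoment_self
    (hw : Integrable (fun θ : sphere (0 : E) 1 => w ⟪e, θ⟫_ℝ) volume.toSphere)
    (he : ‖e‖ = 1) (hue : ⟪u, e⟫_ℝ = 0) :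
    (finrank ℝ E - 1) * zonalSecondMoment w e u u =
      ‖u‖ ^ 2 * ((∫ θ : sphere (0 : E) 1, w ⟪e, θ⟫_ℝ ∂volume.toSphere) -
        zonalSecondMoment w e e e) := by
  classical
  obtain ⟨s, b, i, rfl⟩ := exists_orthonormalBasis_apply_eq he
  have hself (j : s) (hj : j ∈ Finset.univ.erase i) :
      ‖u‖ ^ 2 * zonalSecondMoment w (b i) (b j) (b j) = zonalSecondMoment w (b i) u u := by
    have hji : ⟪‖u‖ • b j, b i⟫_ℝ = 0 := by
      rw [real_inner_smul_left, b.inner_eq_zero (Finset.ne_of_mem_erase hj), mul_zero]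
    have hnorm : ‖‖u‖ • b j‖ = ‖u‖ := by simp [norm_smul]
    rw [← zonalSecondMoment_self_eq_of_norm_eq w hji hue hnorm, zonalSecondMoment_smul_left,
      zonalSecondMoment_smul_right, pow_two, mul_assoc]
  have hcard : ((Finset.univ.erase i).card : ℝ) = finrank ℝ E - 1 := by
    rw [Finset.cast_card_erase_of_mem (Finset.mem_univ i), Finset.card_univ,
      finrank_eq_card_basis b.toBasis]
  rw [← sum_zonalSecondMoment_orthonormalBasis hw b, ← Finset.add_sum_erase _ _ (Finset.mem_univ i),
    add_sub_cancel_left, Finset.mul_sum, Finset.sum_congr rfl hself, Finset.sum_const,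
    nsmul_eq_mul, hcard]

lemma finrank_sub_one_mul_zonalSecondMoment
    (hw : Integrable (fun θ : sphere (0 : E) 1 => w ⟪e, θ⟫_ℝ) volume.toSphere)
    (he : ‖e‖ = 1) (hue : ⟪u, e⟫_ℝ = 0) (v : E) :
    (finrank ℝ E - 1) * zonalSecondMoment w e u v =
      ⟪u, v⟫_ℝ * ((∫ θ : sphere (0 : E) 1, w ⟪e, θ⟫_ℝ ∂volume.toSphere) -
        zonalSecondMoment w e e e) := by
  rcases eq_or_ne u 0 with rfl | hu
  · simp [zonalSecondMoment]
  · have hu' : ‖u‖ ^ 2 ≠ 0 := by simpa using hu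
    refine mul_left_cancel₀ hu' ?_
    linear_combination (finrank ℝ E - 1 : ℝ) * norm_sq_mul_zonalSecondMoment hw hue v +
      ⟪u, v⟫_ℝ * finrank_sub_one_mul_zonalSecondMoment_self hw he hue

theorem sphere_integral_orthogonal_projections_general (hdim : 1 < finrank ℝ E)
    (hw : Integrable (fun θ : sphere (0 : E) 1 => w ⟪e, θ⟫_ℝ) volume.toSphere)
    (he : ‖e‖ = 1) (hue : ⟪u, e⟫_ℝ = 0) (v : E) :
    ∫ θ : sphere (0 : E) 1, ⟪u, θ⟫_ℝ * ⟪v, θ⟫_ℝ * w ⟪e, θ⟫_ℝ ∂volume.toSphere =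
      ⟪u, v⟫_ℝ * (((∫ θ : sphere (0 : E) 1, w ⟪e, θ⟫_ℝ ∂volume.toSphere) -
        ∫ θ : sphere (0 : E) 1, ⟪e, θ⟫_ℝ ^ 2 * w ⟪e, θ⟫_ℝ ∂volume.toSphere) /
          (finrank ℝ E - 1)) := by
  have hdim' : (finrank ℝ E - 1 : ℝ) ≠ 0 := sub_ne_zero.2 (by exact_mod_cast hdim.ne')
  simp only [pow_two]
  rw [← mul_div_assoc, eq_div_iff hdim', mul_comm]
  exact finrank_sub_one_mul_zonalSecondMoment hw he hue v

end ZonalSecondMoment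

/-- **Sphere integral of a product of projections orthogonal to `e₁`.**
If `u, v ∈ ℝ^d` are orthogonal to the first basis vector (`u₁ = v₁ = 0`), then
`∫_{S^{d−1}} (θ·u)(θ·v) e^{−cθ₁²} dσ_{d−1}(θ) = (u·v)(J₁(c) − J₂(c))/(d−1)`. -/
theorem sphere_integral_orthogonal_projections
    (d : ℕ) (hd : 2 ≤ d) (c : ℝ) (u v : EuclideanSpace ℝ (Fin d))
    (hu : u ⟨0, by omega⟩ = 0) (hv : v ⟨0, by omega⟩ = 0) :
    (∫ θ : Metric.sphere (0 : EuclideanSpace ℝ (Fin d)) 1,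
        (∑ i, (θ : EuclideanSpace ℝ (Fin d)) i * u i)
          * (∑ i, (θ : EuclideanSpace ℝ (Fin d)) i * v i)
          * Real.exp (-c * ((θ : EuclideanSpace ℝ (Fin d)) ⟨0, by omega⟩) ^ 2)
        ∂(sphereSurfaceMeasure d))
      = (∑ i, u i * v i) * ((J1 d hd c - J2 d hd c) / ((d : ℝ) - 1)) := by
  have hw : Continuous fun t : ℝ => exp (-c * t ^ 2) := by fun_prop
  have he : ‖EuclideanSpace.single (⟨0, by omega⟩ : Fin d) (1 : ℝ)‖ = 1 := by simp
  have h := sphere_integral_orthogonal_projections_general (w := fun t => exp (-c * t ^ 2))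
    (by simpa using! hd) (integrable_zonal_of_continuous hw _) he
    (by simpa [EuclideanSpace.inner_single_right] using hu) v
  rw [real_inner_comm] at h
  simpa [J1, J2, sphereSurfaceMeasure, PiLp.inner_apply] using h
end

section
/- Let d ≥ 2, γ, σ > 0, and let U denote the uniform probability measure on the unit sphere S^{d−1} ⊂ ℝ^d. Then for every x ∈ ℝ^d, ∫_{S^{d−1}} ∫_ℝ exp(−γ (θ·x − y)²) dN(0, σ²)(y) dU(θ) = (1 + 2γσ²)^{−1/2} · M(1/2; d/2; −γ‖x‖²/(1 + 2γσ²)), where M denotes Kummer's confluent hypergeometric function. (This is the cross term E_{y~N(0,σ²I_d)}[k_C(x, y)] for the sphere-averaged kernel k_C, giving the unbiased non-sliced estimator of the SIGReg regularizer.) -/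
/-!
Completing the square turns the inner Gaussian integral into
`(1 + 2γσ²)^{-1/2} exp(-c ⟪x, θ⟫²)` with `c = γ / (1 + 2γσ²)`, so it remains to average
`exp(-c ⟪x, θ⟫²)` over the sphere.

The moments of `|⟪x, θ⟫|` are found by computing `∫ |⟪x, z⟫|^p exp(-‖z‖²) dz` in two ways: polar
coordinates factor it into a spherical moment and a radial Gamma integral, while in an orthonormal
basis containing `x / ‖x‖` it is a product of one-dimensional Gaussian integrals. Up to the factor
`‖x‖^{2n}`, the moment of order `p = 2n` is the `n`-th moment of the Beta distribution with
parameters `1/2` and `(d - 1)/2`, which is the probability weight in Euler's integral for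
`M(1/2; d/2; ·)`; hence both sides have the same power series in `c`.
-/

open MeasureTheory ProbabilityTheory Real

/-- The uniform (rotation-invariant) probability measure on the unit sphere
`S^{d−1} ⊂ ℝ^d`, obtained by normalizing the surface measure. -/
noncomputable def uniformSphere (d : ℕ) :
    Measure (Metric.sphere (0 : EuclideanSpace ℝ (Fin d)) 1) :=
  ((volume : Measure (EuclideanSpace ℝ (Fin d))).toSphere Set.univ)⁻¹
    • (volume : Measure (EuclideanSpace ℝ (Fin d))).toSphere

/-- Kummer's confluent hypergeometric function at a negated argument:
`kummerM a b c = M(a; b; −c) = (Γ(b)/(Γ(a)Γ(b−a))) ∫₀¹ t^{a−1}(1−t)^{b−a−1} e^{−ct} dt`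
(Euler integral representation, valid for `b > a > 0`). -/
noncomputable def kummerM (a b c : ℝ) : ℝ :=
  (Real.Gamma b / (Real.Gamma a * Real.Gamma (b - a)))
    * ∫ t in (0 : ℝ)..1, t ^ (a - 1) * (1 - t) ^ (b - a - 1) * Real.exp (-c * t)

lemma ofReal_rpow_mul_one_sub_rpow {t : ℝ} (ht : t ∈ Set.Icc (0 : ℝ) 1) (a b : ℝ) :
    ((t ^ (a - 1) * (1 - t) ^ (b - 1) : ℝ) : ℂ)
      = (t : ℂ) ^ ((a : ℂ) - 1) * (1 - (t : ℂ)) ^ ((b : ℂ) - 1) := by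
  rw [Complex.ofReal_mul, Complex.ofReal_cpow ht.1, Complex.ofReal_cpow (sub_nonneg.2 ht.2)]
  push_cast
  rfl

lemma intervalIntegrable_rpow_mul_one_sub_rpow {a b : ℝ} (ha : 0 < a) (hb : 0 < b) :
    IntervalIntegrable (fun t : ℝ => t ^ (a - 1) * (1 - t) ^ (b - 1)) volume 0 1 := by
  have hconv := Complex.betaIntegral_convergent (u := a) (v := b) (by simpa) (by simpa)
  rw [intervalIntegrable_iff_integrableOn_Ioc_of_le zero_le_one] at hconv ⊢
  refine hconv.re.congr ?_
  filter_upwards [ae_restrict_mem measurableSet_Ioc] with t ht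
  rw [← ofReal_rpow_mul_one_sub_rpow (Set.Ioc_subset_Icc_self ht)]
  rfl

lemma integral_rpow_mul_one_sub_rpow {a b : ℝ} (ha : 0 < a) (hb : 0 < b) :
    ∫ t in (0 : ℝ)..1, t ^ (a - 1) * (1 - t) ^ (b - 1) = beta a b := by
  have hofReal : ((∫ t in (0 : ℝ)..1, t ^ (a - 1) * (1 - t) ^ (b - 1) : ℝ) : ℂ)
      = Complex.betaIntegral a b := by
    rw [← intervalIntegral.integral_ofReal]
    refine intervalIntegral.integral_congr fun t ht => ?_
    rw [Set.uIcc_of_le zero_le_one] at ht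
    exact ofReal_rpow_mul_one_sub_rpow ht a b
  rw [beta_eq_betaIntegralReal a b ha hb, ← hofReal, Complex.ofReal_re]

lemma hasSum_integral_mul_pow_div_factorial {α : Type*} [MeasurableSpace α] {μ : Measure α}
    {w s : α → ℝ} {K : ℝ} (hw : Integrable w μ) (hs : AEStronglyMeasurable s μ)
    (hK : ∀ᵐ a ∂μ, |s a| ≤ K) :
    HasSum (fun n : ℕ => ∫ a, w a * (s a ^ n / n.factorial) ∂μ) (∫ a, w a * exp (s a) ∂μ) := by
  have hexp (t : ℝ) : HasSum (fun n : ℕ => t ^ n / n.factorial) (exp t) := by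
    rw [exp_eq_exp_ℝ]
    exact NormedSpace.expSeries_div_hasSum_exp t
  refine hasSum_integral_of_dominated_convergence
    (fun n a => |w a| * (K ^ n / n.factorial)) (fun n => ?_) (fun n => ?_) ?_ ?_ ?_
  · exact hw.aestronglyMeasurable.mul
      (((continuous_pow n).div_const _).comp_aestronglyMeasurable hs)
  · filter_upwards [hK] with a ha
    rw [norm_eq_abs, abs_mul, abs_div, abs_pow, Nat.abs_cast]
    gcongr
  · exact .of_forall fun a => ((hexp K).mul_left _).summable
  · simp_rw [fun a => ((hexp K).mul_left |w a|).tsum_eq]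
    exact hw.abs.mul_const _
  · exact .of_forall fun a => (hexp (s a)).mul_left _

lemma integral_rpow_mul_one_sub_rpow_mul_pow {a b : ℝ} (ha : 0 < a) (hb : 0 < b) (n : ℕ) :
    ∫ t in (0 : ℝ)..1, t ^ (a - 1) * (1 - t) ^ (b - 1) * t ^ n = beta (a + n) b := by
  rw [← integral_rpow_mul_one_sub_rpow (by positivity) hb,
    intervalIntegral.integral_of_le zero_le_one, intervalIntegral.integral_of_le zero_le_one]
  refine setIntegral_congr_fun measurableSet_Ioc fun t ht => ?_
  rw [mul_right_comm, ← rpow_natCast t n, ← rpow_add ht.1, sub_add_eq_add_sub]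

lemma hasSum_kummerM {a b : ℝ} (ha : 0 < a) (hab : a < b) (c : ℝ) :
    HasSum (fun n : ℕ =>
        Gamma (a + n) * Gamma b / (Gamma a * Gamma (b + n)) * ((-c) ^ n / n.factorial))
      (kummerM a b c) := by
  have hba : 0 < b - a := sub_pos.2 hab
  have hint := intervalIntegrable_rpow_mul_one_sub_rpow ha hba
  rw [intervalIntegrable_iff_integrableOn_Ioc_of_le zero_le_one] at hint
  have hbound : ∀ᵐ t ∂volume.restrict (Set.Ioc (0 : ℝ) 1), |-c * t| ≤ |c| := by
    filter_upwards [ae_restrict_mem measurableSet_Ioc] with t ht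
    rw [abs_mul, abs_neg, abs_of_pos ht.1]
    exact mul_le_of_le_one_right (abs_nonneg c) ht.2
  have hterm (n : ℕ) :
      ∫ t in Set.Ioc (0 : ℝ) 1, t ^ (a - 1) * (1 - t) ^ (b - a - 1) * ((-c * t) ^ n / n.factorial)
        = beta (a + n) (b - a) * ((-c) ^ n / n.factorial) := by
    rw [← integral_rpow_mul_one_sub_rpow_mul_pow ha hba,
      intervalIntegral.integral_of_le zero_le_one, ← integral_mul_const]
    congr with t
    ring
  have hsum := (hasSum_integral_mul_pow_div_factorial hint
    (Continuous.aestronglyMeasurable (by fun_prop)) hbound).mul_left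
    (Gamma b / (Gamma a * Gamma (b - a)))
  rw [← intervalIntegral.integral_of_le zero_le_one, ← kummerM] at hsum
  refine hsum.congr_fun fun n => ?_
  have hGamma : Gamma (b - a) ≠ 0 := (Gamma_pos_of_pos hba).ne'
  rw [hterm, beta, add_right_comm, add_sub_cancel]
  field_simp

lemma integral_Ioi_pow_mul_rpow_mul_exp_neg_sq {p : ℝ} {k : ℕ} (hp : -1 < p + k) :
    ∫ r in Set.Ioi (0 : ℝ), r ^ k * (r ^ p * exp (-r ^ 2)) = Gamma ((p + k + 1) / 2) / 2 := by
  have hGamma := integral_rpow_mul_exp_neg_rpow two_pos hp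
  rw [one_div_mul_eq_div] at hGamma
  rw [← hGamma]
  refine setIntegral_congr_fun measurableSet_Ioi fun r hr => ?_
  simp only [rpow_two]
  rw [rpow_add_natCast hr.ne', mul_left_comm, mul_assoc]

lemma integral_abs_rpow_mul_exp_neg_sq {p : ℝ} (hp : -1 < p) :
    ∫ t : ℝ, |t| ^ p * exp (-t ^ 2) = Gamma ((p + 1) / 2) := by
  have habs := integral_comp_abs (f := fun t : ℝ => t ^ p * exp (-t ^ 2))
  have hradial := integral_Ioi_pow_mul_rpow_mul_exp_neg_sq (p := p) (k := 0) (by simpa)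
  simp only [sq_abs] at habs
  simp only [pow_zero, one_mul, Nat.cast_zero, add_zero] at hradial
  rw [habs, hradial, mul_div_cancel₀ _ two_ne_zero]

lemma integral_exp_neg_mul_sub_sq_gaussianReal {γ : ℝ} {v : NNReal} (hγv : 0 < 1 + 2 * γ * v)
    (m s : ℝ) :
    ∫ y, exp (-γ * (s - y) ^ 2) ∂gaussianReal m v
      = (1 + 2 * γ * v) ^ (-(1 : ℝ) / 2) * exp (-(γ / (1 + 2 * γ * v)) * (s - m) ^ 2) := by
  rcases eq_or_ne v 0 with rfl | hv
  · simp
  have : (0 : ℝ) < v := NNReal.coe_pos.2 (pos_iff_ne_zero.2 hv)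
  have complete_square (y : ℝ) : gaussianPDFReal m v y • exp (-γ * (s - y) ^ 2)
      = ((√(2 * π * v))⁻¹ * exp (-(γ / (1 + 2 * γ * v)) * (s - m) ^ 2))
        * exp (-((1 + 2 * γ * v) / (2 * v))
            * (y - (m + 2 * γ * v * s) / (1 + 2 * γ * v)) ^ 2) := by
    rw [gaussianPDFReal, smul_eq_mul, mul_assoc, mul_assoc _ (exp _), ← exp_add, ← exp_add]
    congr 2
    generalize hD : 1 + 2 * γ * (v : ℝ) = D at hγv
    field_simp
    subst hD
    ring
  have hconst : (√(2 * π * v))⁻¹ * √(π / ((1 + 2 * γ * v) / (2 * v)))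
      = (1 + 2 * γ * v) ^ (-(1 : ℝ) / 2) := by
    rw [neg_div, rpow_neg hγv.le, ← sqrt_eq_rpow, ← sqrt_inv, ← sqrt_inv,
      ← sqrt_mul (by positivity)]
    congr 1
    field_simp
  simp_rw [integral_gaussianReal_eq_integral_smul hv, complete_square]
  rw [integral_const_mul,
    integral_sub_right_eq_self (fun y => exp (-((1 + 2 * γ * v) / (2 * v)) * y ^ 2)),
    integral_gaussian, mul_right_comm, hconst]

lemma integral_comp_normalize_smul_comp_norm {E F : Type*} [NormedAddCommGroup E]
    [NormedSpace ℝ E] [FiniteDimensional ℝ E] [Nontrivial E] [MeasurableSpace E] [BorelSpace E]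
    [NormedAddCommGroup F] [NormedSpace ℝ F]
    (μ : Measure E) [μ.IsAddHaarMeasure] (f : E → ℝ) (g : ℝ → F) :
    ∫ z, f (‖z‖⁻¹ • z) • g ‖z‖ ∂μ
      = (∫ θ : Metric.sphere (0 : E) 1, f θ ∂μ.toSphere)
        • ∫ r in Set.Ioi (0 : ℝ), r ^ (Module.finrank ℝ E - 1) • g r :=
  calc
    _ = ∫ z : ({(0 : E)}ᶜ : Set E), f (‖z.1‖⁻¹ • z.1) • g ‖z.1‖ ∂(μ.comap (↑)) := by
      rw [integral_subtype_comap (measurableSet_singleton _).compl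
        fun z : E => f (‖z‖⁻¹ • z) • g ‖z‖, restrict_compl_singleton]
    _ = ∫ q : Metric.sphere (0 : E) 1 × Set.Ioi (0 : ℝ), f q.1 • g q.2
          ∂μ.toSphere.prod (.volumeIoiPow (Module.finrank ℝ E - 1)) := by
      simpa using μ.measurePreserving_homeomorphUnitSphereProd.integral_comp
        (Homeomorph.measurableEmbedding _)
        fun q : Metric.sphere (0 : E) 1 × Set.Ioi (0 : ℝ) => f q.1 • g q.2
    _ = (∫ θ : Metric.sphere (0 : E) 1, f θ ∂μ.toSphere)
          • ∫ r : Set.Ioi (0 : ℝ), g r ∂.volumeIoiPow (Module.finrank ℝ E - 1) :=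
      integral_prod_smul (fun θ : Metric.sphere (0 : E) 1 => f θ)
        (fun r : Set.Ioi (0 : ℝ) => g r)
    _ = _ := by
      congr 1
      simp only [Measure.volumeIoiPow, ENNReal.ofReal]
      rw [integral_withDensity_eq_integral_smul (by fun_prop),
        integral_subtype_comap measurableSet_Ioi
          fun r : ℝ => (r ^ (Module.finrank ℝ E - 1)).toNNReal • g r]
      refine setIntegral_congr_fun measurableSet_Ioi fun r hr => ?_
      simp only [NNReal.smul_def, coe_toNNReal _ (pow_nonneg (le_of_lt hr) _)]

section InnerProductSpace

open scoped RealInnerProductSpace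

variable {E : Type*} [NormedAddCommGroup E] [InnerProductSpace ℝ E] [FiniteDimensional ℝ E]
  [MeasurableSpace E] [BorelSpace E]

lemma integral_prod_repr {ι 𝕜 : Type*} [Fintype ι] [RCLike 𝕜] (b : OrthonormalBasis ι ℝ E)
    (f : ι → ℝ → 𝕜) :
    ∫ z, ∏ i, f i (b.repr z i) = ∏ i, ∫ t, f i t :=
  calc
    _ = ∫ u : EuclideanSpace ℝ ι, ∏ i, f i (u i) :=
      b.measurePreserving_repr.integral_comp b.repr.toHomeomorph.measurableEmbedding
        fun u : EuclideanSpace ℝ ι => ∏ i, f i (u i)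
    _ = ∫ u : ι → ℝ, ∏ i, f i (u i) :=
      (PiLp.volume_preserving_ofLp ι).integral_comp
        (MeasurableEquiv.toLp 2 (ι → ℝ)).symm.measurableEmbedding
        fun u : ι → ℝ => ∏ i, f i (u i)
    _ = _ := integral_fintype_prod_volume_eq_prod f

lemma integral_comp_inner_mul_exp_neg_norm_sq {e : E} (he : ‖e‖ = 1) (g : ℝ → ℝ) :
    ∫ z, g ⟪e, z⟫ * exp (-‖z‖ ^ 2)
      = (∫ t, g t * exp (-t ^ 2)) * √π ^ (Module.finrank ℝ E - 1) := by
  classical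
  have he_orthonormal : Orthonormal ℝ ((↑) : ({e} : Set E) → E) := by
    simpa [orthonormal_subsingleton_iff] using he
  obtain ⟨ι, b, he_mem, hb⟩ := he_orthonormal.exists_orthonormalBasis_extension
  let i₀ : ι := ⟨e, he_mem rfl⟩
  have hfactor (z : E) : g ⟪e, z⟫ * exp (-‖z‖ ^ 2)
      = ∏ i, (if i = i₀ then g (b.repr z i) else 1) * exp (-b.repr z i ^ 2) := by
    have hb₀ : b i₀ = e := congrFun hb i₀
    rw [Finset.prod_mul_distrib, Fintype.prod_ite_eq', ← exp_sum, Finset.sum_neg_distrib,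
      b.repr_apply_apply, hb₀, ← b.repr.norm_map, EuclideanSpace.real_norm_sq_eq]
  have hother : ∀ i ∈ Finset.univ.erase i₀,
      ∫ t, (if i = i₀ then g t else 1) * exp (-t ^ 2) = √π := fun i hi => by
    simpa [Finset.ne_of_mem_erase hi] using integral_gaussian 1
  simp_rw [hfactor]
  rw [integral_prod_repr b (fun i t => (if i = i₀ then g t else 1) * exp (-t ^ 2)),
    ← Finset.mul_prod_erase _ _ (Finset.mem_univ i₀), Finset.prod_congr rfl hother,
    Finset.prod_const, Finset.card_erase_of_mem (Finset.mem_univ i₀), Finset.card_univ,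
    ← Module.finrank_eq_card_basis b.toBasis]
  simp only [if_true]

section Haar

variable [Nontrivial E] (μ : Measure E) [μ.IsAddHaarMeasure]

lemma integral_abs_inner_rpow_mul_exp_neg_norm_sq {p : ℝ} (hp : -1 < p) (x : E) :
    ∫ z, |⟪x, z⟫| ^ p * exp (-‖z‖ ^ 2) ∂μ
      = ‖x‖ ^ p * (Gamma ((p + 1) / 2) / Gamma (1 / 2)) * ∫ z, exp (-‖z‖ ^ 2) ∂μ := by
  obtain ⟨e, he, hx⟩ : ∃ e : E, ‖e‖ = 1 ∧ x = ‖x‖ • e := by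
    rcases eq_or_ne x 0 with rfl | hx
    · simpa using exists_norm_eq E zero_le_one
    · exact ⟨‖x‖⁻¹ • x, norm_smul_inv_norm hx, (smul_inv_smul₀ (norm_ne_zero_iff.2 hx) x).symm⟩
  have hscale (z : E) : |⟪x, z⟫| ^ p = ‖x‖ ^ p * |⟪e, z⟫| ^ p := by
    conv_lhs => rw [hx, real_inner_smul_left, abs_mul, abs_norm,
      mul_rpow (norm_nonneg x) (abs_nonneg _)]
  have htotal : ∫ z : E, exp (-‖z‖ ^ 2) = Gamma (1 / 2) * √π ^ (Module.finrank ℝ E - 1) := by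
    have hline : ∫ t : ℝ, exp (-t ^ 2) = Gamma (1 / 2) := by
      simpa using integral_abs_rpow_mul_exp_neg_sq neg_one_lt_zero
    simpa only [one_mul, hline] using integral_comp_inner_mul_exp_neg_norm_sq he fun _ => 1
  have hGamma : Gamma (1 / 2 : ℝ) ≠ 0 := (Gamma_pos_of_pos one_half_pos).ne'
  rw [μ.isAddLeftInvariant_eq_smul volume]
  simp_rw [integral_smul_nnreal_measure, hscale, mul_assoc]
  rw [integral_const_mul, integral_comp_inner_mul_exp_neg_norm_sq he (fun t => |t| ^ p),
    integral_abs_rpow_mul_exp_neg_sq hp, htotal, mul_smul_comm, mul_smul_comm]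
  field_simp

lemma integral_abs_inner_rpow_mul_exp_neg_norm_sq_eq_integral_toSphere {p : ℝ}
    (hp : 0 < p + Module.finrank ℝ E) (x : E) :
    ∫ z, |⟪x, z⟫| ^ p * exp (-‖z‖ ^ 2) ∂μ
      = (∫ θ : Metric.sphere (0 : E) 1, |⟪x, (θ : E)⟫| ^ p ∂μ.toSphere)
        * (Gamma ((p + Module.finrank ℝ E) / 2) / 2) := by
  have hpolar (z : E) : |⟪x, z⟫| ^ p * exp (-‖z‖ ^ 2)
      = |⟪x, ‖z‖⁻¹ • z⟫| ^ p • (‖z‖ ^ p * exp (-‖z‖ ^ 2)) := by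
    have hinner : ⟪x, z⟫ = ⟪x, ‖z‖⁻¹ • z⟫ * ‖z‖ := by
      rcases eq_or_ne z 0 with rfl | hz
      · simp
      · rw [real_inner_smul_right, mul_right_comm, inv_mul_cancel₀ (norm_ne_zero_iff.2 hz), one_mul]
    rw [hinner, abs_mul, abs_norm, mul_rpow (abs_nonneg _) (norm_nonneg z), mul_assoc, smul_eq_mul]
  have hfinrank : ((Module.finrank ℝ E - 1 : ℕ) : ℝ) = Module.finrank ℝ E - 1 :=
    Nat.cast_pred Module.finrank_pos
  simp_rw [hpolar]
  rw [integral_comp_normalize_smul_comp_norm μ (fun z => |⟪x, z⟫| ^ p)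
    (fun r => r ^ p * exp (-r ^ 2))]
  simp only [smul_eq_mul]
  rw [integral_Ioi_pow_mul_rpow_mul_exp_neg_sq (by linarith), hfinrank, add_assoc, sub_add_cancel]

lemma average_sphere_abs_inner_rpow {p : ℝ} (hp : -1 < p) (x : E) :
    ⨍ θ : Metric.sphere (0 : E) 1, |⟪x, (θ : E)⟫| ^ p ∂μ.toSphere
      = ‖x‖ ^ p * (Gamma ((p + 1) / 2) * Gamma (Module.finrank ℝ E / 2)
          / (Gamma (1 / 2) * Gamma ((p + Module.finrank ℝ E) / 2))) := by
  have hfinrank : (1 : ℝ) ≤ Module.finrank ℝ E := mod_cast (Module.finrank_pos : 0 < _)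
  have hpolar {q : ℝ} (hq : -1 < q) :=
    integral_abs_inner_rpow_mul_exp_neg_norm_sq_eq_integral_toSphere μ (p := q) (by linarith) x
  -- The exponent `0` supplies the total mass of the sphere.
  have htotal : ∫ z, exp (-‖z‖ ^ 2) ∂μ
      = μ.toSphere.real Set.univ * (Gamma (Module.finrank ℝ E / 2) / 2) := by
    simpa using hpolar neg_one_lt_zero
  have hmoment := (hpolar hp).symm.trans (integral_abs_inner_rpow_mul_exp_neg_norm_sq μ hp x)
  have hmass : μ.toSphere.real Set.univ ≠ 0 :=
    have : NeZero μ.toSphere := ⟨μ.toSphere_ne_zero⟩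
    measureReal_univ_ne_zero
  have hGamma : Gamma ((p + Module.finrank ℝ E) / 2) ≠ 0 := (Gamma_pos_of_pos (by linarith)).ne'
  rw [htotal] at hmoment
  rw [average_eq, smul_eq_mul, inv_mul_eq_iff_eq_mul₀ hmass, ← mul_left_inj' hGamma]
  field_simp at hmoment ⊢
  linear_combination hmoment

lemma average_sphere_inner_pow_two_mul (n : ℕ) (x : E) :
    ⨍ θ : Metric.sphere (0 : E) 1, ⟪x, (θ : E)⟫ ^ (2 * n) ∂μ.toSphere
      = Gamma (1 / 2 + n) * Gamma (Module.finrank ℝ E / 2)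
          / (Gamma (1 / 2) * Gamma (Module.finrank ℝ E / 2 + n)) * ‖x‖ ^ (2 * n) := by
  have hpow (t : ℝ) : |t| ^ ((2 * n : ℕ) : ℝ) = t ^ (2 * n) := by
    rw [rpow_natCast, (even_two_mul n).pow_abs]
  have hmoment := average_sphere_abs_inner_rpow μ (p := (2 * n : ℕ))
    (neg_one_lt_zero.trans_le (Nat.cast_nonneg _)) x
  simp_rw [hpow, rpow_natCast] at hmoment
  rw [hmoment, mul_comm]
  push_cast
  ring_nf

end Haar

lemma average_sphere_exp_neg_mul_inner_sq (μ : Measure E) [μ.IsAddHaarMeasure]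
    (hE : 2 ≤ Module.finrank ℝ E) (c : ℝ) (x : E) :
    ⨍ θ : Metric.sphere (0 : E) 1, exp (-c * ⟪x, (θ : E)⟫ ^ 2) ∂μ.toSphere
      = kummerM (1 / 2) (Module.finrank ℝ E / 2) (c * ‖x‖ ^ 2) := by
  have : Nontrivial E := Module.nontrivial_of_finrank_pos (by omega : 0 < Module.finrank ℝ E)
  have hfinrank : (2 : ℝ) ≤ Module.finrank ℝ E := by exact_mod_cast hE
  have hbound (θ : Metric.sphere (0 : E) 1) : |-c * ⟪x, (θ : E)⟫ ^ 2| ≤ |c| * ‖x‖ ^ 2 := by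
    have hinner : |⟪x, (θ : E)⟫| ≤ ‖x‖ := by simpa using abs_real_inner_le_norm x (θ : E)
    rw [abs_mul, abs_neg, abs_pow]
    gcongr
  have hsum := (hasSum_integral_mul_pow_div_factorial (μ := μ.toSphere)
    (integrable_const (1 : ℝ)) (Continuous.aestronglyMeasurable (by fun_prop))
    (.of_forall hbound)).mul_left (μ.toSphere.real Set.univ)⁻¹
  simp only [one_mul, ← smul_eq_mul (μ.toSphere.real Set.univ)⁻¹, ← average_eq] at hsum
  refine hsum.unique ((hasSum_kummerM one_half_pos (by linarith) _).congr_fun fun n => ?_)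
  have hterm (θ : Metric.sphere (0 : E) 1) : (-c * ⟪x, (θ : E)⟫ ^ 2) ^ n / n.factorial
      = (-c) ^ n / n.factorial * ⟪x, (θ : E)⟫ ^ (2 * n) := by
    rw [mul_pow, ← pow_mul, mul_div_right_comm]
  simp_rw [hterm]
  rw [average, integral_const_mul, ← average, average_sphere_inner_pow_two_mul,
    neg_mul_eq_neg_mul, mul_pow, pow_mul ‖x‖]
  ring

theorem sphere_averaged_gaussian_cross_term_general (μ : Measure E) [μ.IsAddHaarMeasure]
    (hE : 2 ≤ Module.finrank ℝ E) {γ : ℝ} {v : NNReal} (hγv : 0 < 1 + 2 * γ * v) (x : E) :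
    ⨍ θ : Metric.sphere (0 : E) 1,
        (∫ y, exp (-γ * (⟪x, (θ : E)⟫ - y) ^ 2) ∂gaussianReal 0 v) ∂μ.toSphere
      = (1 + 2 * γ * v) ^ (-(1 : ℝ) / 2)
        * kummerM (1 / 2) (Module.finrank ℝ E / 2) (γ * ‖x‖ ^ 2 / (1 + 2 * γ * v)) := by
  simp_rw [integral_exp_neg_mul_sub_sq_gaussianReal hγv, sub_zero]
  rw [average, integral_const_mul, ← average, average_sphere_exp_neg_mul_inner_sq μ hE,
    div_mul_eq_mul_div]

end InnerProductSpace

/-- **Cross term of the sphere-averaged Gaussian kernel against a Gaussian prior.**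
For every `x ∈ ℝ^d`,
`∫_{S^{d−1}} ∫_ℝ exp(−γ(θ·x − y)²) dN(0,σ²)(y) dU(θ)
  = (1+2γσ²)^{−1/2} M(1/2; d/2; −γ‖x‖²/(1+2γσ²))`. -/
theorem sphere_averaged_gaussian_cross_term
    (d : ℕ) (hd : 2 ≤ d) (γ σ : ℝ) (hγ : 0 < γ) (hσ : 0 < σ)
    (x : EuclideanSpace ℝ (Fin d)) :
    (∫ θ : Metric.sphere (0 : EuclideanSpace ℝ (Fin d)) 1,
        (∫ y : ℝ,
          Real.exp (-γ * ((∑ i, (θ : EuclideanSpace ℝ (Fin d)) i * x i) - y) ^ 2)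
          ∂(gaussianReal 0 ⟨σ ^ 2, sq_nonneg σ⟩))
      ∂(uniformSphere d))
    = (1 + 2 * γ * σ ^ 2) ^ (-(1 : ℝ) / 2)
        * kummerM (1 / 2) ((d : ℝ) / 2) (γ * ‖x‖ ^ 2 / (1 + 2 * γ * σ ^ 2)) := by
  simpa only [finrank_euclideanSpace_fin, PiLp.inner_apply, RCLike.inner_apply, conj_trivial] using!
    sphere_averaged_gaussian_cross_term_general volume (by simpa using hd)
      (v := ⟨σ ^ 2, sq_nonneg σ⟩) (show 0 < 1 + 2 * γ * σ ^ 2 by positivity) x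
end

section
/- Let d ≥ 2. Then lim_{c → ∞} √c · ∫₀¹ t^{−1/2} (1−t)^{(d−3)/2} e^{−ct} dt = √π; equivalently, lim_{c → ∞} √c · M(1/2; d/2; −c) = Γ(d/2)/Γ((d−1)/2), where M(1/2; d/2; −c) = (Γ(d/2)/(Γ(1/2)Γ((d−1)/2))) ∫₀¹ t^{−1/2}(1−t)^{(d−3)/2} e^{−ct} dt. In particular, the sphere-averaged kernel k_C(x,y) = M(1/2; d/2; −γ‖x−y‖²) decays polynomially, like Γ(d/2)/(Γ((d−1)/2) √γ ‖x−y‖) as ‖x−y‖ → ∞, rather than exponentially. -/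
/-!
This is the leading order of Watson's lemma. The Gamma densities of shape `a` and rate `c` satisfy
`p_{a,c}(t) = c p_{a,1}(c t)`, so they concentrate at `0⁺` as `c → ∞`, and
`c ^ a ∫₀¹ t^{a-1} e^{-ct} f(t) dt = Γ(a) ∫₀¹ p_{a,c}(t) f(t) dt` tends to `Γ(a) f(0⁺)` for every
integrable `f` with a right limit at `0`. For Kummer's function `f(t) = (1 - t)^{b-a-1}`, which is
integrable because `b - a - 1 > -1` and tends to `1` at `0`.
-/

open Real Filter

open MeasureTheory ProbabilityTheory Set Topology

section GammaDensity

lemma mul_gammaPDFReal_mul (a : ℝ) {c r : ℝ} (hc : 0 < c) (hr : 0 ≤ r) (x : ℝ) :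
    c * gammaPDFReal a r (c * x) = gammaPDFReal a (c * r) x := by
  rcases lt_or_ge x 0 with hx | hx
  · simp only [gammaPDFReal, if_neg hx.not_ge, if_neg (mul_neg_of_pos_of_neg hc hx).not_ge,
      mul_zero]
  · have hca : c * c ^ (a - 1) = c ^ a := by
      rw [rpow_sub_one hc.ne', mul_div_cancel₀ _ hc.ne']
    simp only [gammaPDFReal, if_pos hx, if_pos (mul_nonneg hc.le hx), mul_rpow hc.le hx,
      mul_rpow hc.le hr, ← hca]
    ring_nf

lemma integral_gammaPDFReal {a r : ℝ} (ha : 0 < a) (hr : 0 < r) :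
    ∫ x, gammaPDFReal a r x = 1 := by
  rw [integral_eq_lintegral_of_nonneg_ae (ae_of_all _ (gammaPDFReal_nonneg ha hr)) (by fun_prop)]
  exact (ENNReal.toReal_eq_one_iff _).2 (lintegral_gammaPDF_eq_one ha hr)

lemma tendsto_mul_gammaPDFReal_atTop (a : ℝ) {r : ℝ} (hr : 0 < r) :
    Tendsto (fun x => x * gammaPDFReal a r x) atTop (𝓝 0) := by
  have hdecay := (tendsto_rpow_mul_exp_neg_mul_atTop_nhds_zero a r hr).const_mul (r ^ a / Gamma a)
  rw [mul_zero] at hdecay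
  refine hdecay.congr' ?_
  filter_upwards [eventually_gt_atTop 0] with x hx
  rw [gammaPDFReal, if_pos hx.le, rpow_sub_one hx.ne', neg_mul]
  field_simp

lemma tendsto_norm_mul_gammaPDFReal_cobounded (a : ℝ) {r : ℝ} (hr : 0 < r) :
    Tendsto (fun x => ‖x‖ * gammaPDFReal a r x) (Bornology.cobounded ℝ) (𝓝 0) := by
  rw [IsOrderBornology.cobounded_eq, tendsto_sup]
  constructor
  · refine tendsto_const_nhds.congr' ?_
    filter_upwards [eventually_lt_atBot 0] with x hx
    rw [gammaPDFReal, if_neg hx.not_ge, mul_zero]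
  · refine (tendsto_mul_gammaPDFReal_atTop a hr).congr' ?_
    filter_upwards [eventually_ge_atTop 0] with x hx
    rw [norm_of_nonneg hx]

end GammaDensity

section Watson

variable {E : Type*} [NormedAddCommGroup E] {f : ℝ → E} {l : E}

lemma exists_integrable_continuousAt_eqOn_Ioi {x : ℝ} (hf : IntegrableOn f (Ioi x))
    (hlim : Tendsto f (𝓝[>] x) (𝓝 l)) :
    ∃ g : ℝ → E, Integrable g ∧ ContinuousAt g x ∧ g x = l ∧ EqOn g f (Ioi x) := by
  classical
  let g := (Ioi x).piecewise f ((Ioc (x - 1) x).indicator fun _ => l)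
  have hg_right : EqOn g f (Ioi x) := piecewise_eqOn _ _ _
  have hg_left : EqOn g (fun _ => l) (Ioc (x - 1) x) := fun t ht => by
    simp only [g, piecewise_eq_of_notMem _ _ _ (notMem_Ioi.2 ht.2), indicator_of_mem ht]
  have hgx : g x = l := hg_left (right_mem_Ioc.2 (sub_one_lt x))
  refine ⟨g, ?_, ?_, hgx, hg_right⟩
  · have hconst : IntegrableOn (fun _ => l) (Ioc (x - 1) x) := integrableOn_const (by simp)
    exact Integrable.piecewise measurableSet_Ioi hf
      (hconst.integrable_indicator measurableSet_Ioc).integrableOn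
  · rw [continuousAt_iff_continuous_left'_right', ContinuousWithinAt, ContinuousWithinAt, hgx]
    refine ⟨tendsto_const_nhds.congr' ?_, hlim.congr' hg_right.symm.eventuallyEq_nhdsWithin⟩
    filter_upwards [Ioo_mem_nhdsLT (sub_one_lt x)] with t ht
    exact (hg_left (Ioo_subset_Ioc_self ht)).symm

variable [NormedSpace ℝ E]

lemma setIntegral_Ioi_gammaPDFReal_smul (a c : ℝ) (f : ℝ → E) :
    ∫ t in Ioi 0, gammaPDFReal a c t • f t = ∫ t, gammaPDFReal a c t • f t := by
  rw [← integral_Ici_eq_integral_Ioi]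
  refine setIntegral_eq_integral_of_forall_compl_eq_zero fun t ht => ?_
  rw [gammaPDFReal, if_neg (notMem_Ici.1 ht).not_ge, zero_smul]

variable [CompleteSpace E] {a : ℝ}

theorem tendsto_integral_gammaPDFReal_smul (ha : 0 < a) {g : ℝ → E} (hg : Integrable g)
    (hg0 : ContinuousAt g 0) :
    Tendsto (fun c => ∫ t, gammaPDFReal a c t • g t) atTop (𝓝 (g 0)) := by
  have hpeak := tendsto_integral_comp_smul_smul_of_integrable (μ := volume)
    (gammaPDFReal_nonneg ha one_pos) (integral_gammaPDFReal ha one_pos)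
    (by simpa using tendsto_norm_mul_gammaPDFReal_cobounded a one_pos) hg hg0
  refine hpeak.congr' ?_
  filter_upwards [eventually_gt_atTop 0] with c hc
  simp only [Module.finrank_self, pow_one, smul_eq_mul, mul_gammaPDFReal_mul a hc zero_le_one,
    mul_one]

theorem tendsto_setIntegral_Ioi_gammaPDFReal_smul (ha : 0 < a) (hf : IntegrableOn f (Ioi 0))
    (hlim : Tendsto f (𝓝[>] 0) (𝓝 l)) :
    Tendsto (fun c => ∫ t in Ioi 0, gammaPDFReal a c t • f t) atTop (𝓝 l) := by
  -- Peak-function theorems on `ℝ` ask for continuity at the peak; `f` only has a right limit there.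
  obtain ⟨g, hg, hg0, rfl, hgf⟩ := exists_integrable_continuousAt_eqOn_Ioi hf hlim
  refine (tendsto_integral_gammaPDFReal_smul ha hg hg0).congr fun c => ?_
  rw [← setIntegral_Ioi_gammaPDFReal_smul]
  exact setIntegral_congr_fun measurableSet_Ioi fun t ht => by simp only [hgf ht]

theorem tendsto_rpow_smul_integral_rpow_mul_exp_smul (ha : 0 < a) {T : ℝ} (hT : 0 < T)
    (hf : IntervalIntegrable f volume 0 T) (hlim : Tendsto f (𝓝[>] 0) (𝓝 l)) :
    Tendsto (fun c : ℝ => c ^ a • ∫ t in (0 : ℝ)..T, (t ^ (a - 1) * exp (-c * t)) • f t)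
      atTop (𝓝 (Gamma a • l)) := by
  have hf' : IntegrableOn ((Ioc 0 T).indicator f) (Ioi 0) :=
    (hf.1.integrable_indicator measurableSet_Ioc).integrableOn
  have hlim' : Tendsto ((Ioc 0 T).indicator f) (𝓝[>] 0) (𝓝 l) := by
    refine hlim.congr' ?_
    filter_upwards [Ioc_mem_nhdsGT hT] with t ht using (indicator_of_mem ht f).symm
  refine ((tendsto_setIntegral_Ioi_gammaPDFReal_smul ha hf' hlim').const_smul (Gamma a)).congr
    fun c => ?_
  have hscale : ∀ t ∈ Ioc 0 T,
      Gamma a • gammaPDFReal a c t • f t = c ^ a • (t ^ (a - 1) * exp (-c * t)) • f t := by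
    intro t ht
    have hΓ : Gamma a ≠ 0 := (Gamma_pos_of_pos ha).ne'
    rw [gammaPDFReal, if_pos ht.1.le, smul_smul, smul_smul, neg_mul]
    congr 1
    field_simp
  simp only [← indicator_smul_apply]
  rw [setIntegral_indicator measurableSet_Ioc, inter_eq_right.2 Ioc_subset_Ioi_self,
    intervalIntegral.integral_of_le hT.le, ← integral_smul, ← integral_smul]
  exact setIntegral_congr_fun measurableSet_Ioc hscale

end Watson

section Kummer

variable {a b : ℝ}

lemma intervalIntegrable_one_sub_rpow {β : ℝ} (hβ : -1 < β) (x y : ℝ) :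
    IntervalIntegrable (fun t : ℝ => (1 - t) ^ β) volume x y := by
  have h := intervalIntegral.intervalIntegrable_rpow' (a := 1 - x) (b := 1 - y) hβ
  simpa using h.comp_sub_left 1

theorem tendsto_rpow_mul_integral_rpow_mul_one_sub_rpow_mul_exp {β : ℝ} (ha : 0 < a)
    (hβ : -1 < β) :
    Tendsto (fun c : ℝ => c ^ a *
        ∫ t in (0 : ℝ)..1, t ^ (a - 1) * (1 - t) ^ β * exp (-c * t))
      atTop (𝓝 (Gamma a)) := by
  have hlim : Tendsto (fun t : ℝ => (1 - t) ^ β) (𝓝[>] 0) (𝓝 1) := by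
    have hcont : ContinuousAt (fun t : ℝ => (1 - t) ^ β) 0 :=
      ContinuousAt.rpow_const (by fun_prop) (Or.inl (by norm_num))
    simpa using hcont.tendsto.mono_left nhdsWithin_le_nhds
  simpa only [smul_eq_mul, mul_one, mul_right_comm] using
    tendsto_rpow_smul_integral_rpow_mul_exp_smul ha one_pos
      (intervalIntegrable_one_sub_rpow hβ 0 1) hlim

theorem tendsto_rpow_mul_kummerM (ha : 0 < a) (hab : a < b) :
    Tendsto (fun c : ℝ => c ^ a * kummerM a b c) atTop (𝓝 (Gamma b / Gamma (b - a))) := by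
  have hΓ : Gamma a ≠ 0 := (Gamma_pos_of_pos ha).ne'
  have hintegral := tendsto_rpow_mul_integral_rpow_mul_one_sub_rpow_mul_exp (β := b - a - 1) ha
    (by linarith)
  have hconst : Gamma b / (Gamma a * Gamma (b - a)) * Gamma a = Gamma b / Gamma (b - a) := by
    rw [mul_comm (Gamma a), ← div_div, div_mul_cancel₀ _ hΓ]
  simpa only [kummerM, mul_left_comm, hconst] using
    hintegral.const_mul (Gamma b / (Gamma a * Gamma (b - a)))

theorem tendsto_rpow_mul_kummerM_mul_sq (ha : 0 < a) (hab : a < b) {γ : ℝ} (hγ : 0 < γ) :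
    Tendsto (fun r : ℝ => r ^ (2 * a) * kummerM a b (γ * r ^ 2)) atTop
      (𝓝 (Gamma b / (Gamma (b - a) * γ ^ a))) := by
  have hγa : γ ^ a ≠ 0 := (rpow_pos_of_pos hγ a).ne'
  have hsq : Tendsto (fun r : ℝ => γ * r ^ 2) atTop atTop :=
    (tendsto_pow_atTop two_ne_zero).const_mul_atTop hγ
  rw [← div_div]
  refine (((tendsto_rpow_mul_kummerM ha hab).comp hsq).div_const (γ ^ a)).congr' ?_
  filter_upwards [eventually_ge_atTop 0] with r hr
  rw [Function.comp_apply, mul_rpow hγ.le (sq_nonneg r), rpow_mul hr, rpow_two]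
  field_simp

theorem kummer_tail_asymptotics_general (ha : 0 < a) (hab : a < b) :
    Tendsto (fun c : ℝ => c ^ a *
        ∫ t in (0 : ℝ)..1, t ^ (a - 1) * (1 - t) ^ (b - a - 1) * exp (-c * t))
      atTop (𝓝 (Gamma a))
    ∧ Tendsto (fun c : ℝ => c ^ a * kummerM a b c) atTop (𝓝 (Gamma b / Gamma (b - a)))
    ∧ ∀ γ : ℝ, 0 < γ →
        Tendsto (fun r : ℝ => r ^ (2 * a) * kummerM a b (γ * r ^ 2)) atTop
          (𝓝 (Gamma b / (Gamma (b - a) * γ ^ a))) :=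
  ⟨tendsto_rpow_mul_integral_rpow_mul_one_sub_rpow_mul_exp ha (by linarith),
    tendsto_rpow_mul_kummerM ha hab, fun _ hγ => tendsto_rpow_mul_kummerM_mul_sq ha hab hγ⟩

end Kummer

/-- **Polynomial tail decay of the sphere-averaged Gaussian kernel.**
`lim_{c→∞} √c ∫₀¹ t^{−1/2}(1−t)^{(d−3)/2} e^{−ct} dt = √π`; equivalently
`lim_{c→∞} √c · M(1/2; d/2; −c) = Γ(d/2)/Γ((d−1)/2)`. In particular, for every `γ > 0`,
`r · M(1/2; d/2; −γr²) → Γ(d/2)/(Γ((d−1)/2)√γ)` as `r → ∞`, so the sphere-averaged kernel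
`k_C(x,y) = M(1/2; d/2; −γ‖x−y‖²)` decays like `Γ(d/2)/(Γ((d−1)/2)√γ‖x−y‖)` rather than
exponentially. -/
theorem kummer_tail_asymptotics (d : ℕ) (hd : 2 ≤ d) :
    (Tendsto (fun c : ℝ => Real.sqrt c
        * ∫ t in (0 : ℝ)..1,
            t ^ (-(1 : ℝ) / 2) * (1 - t) ^ (((d : ℝ) - 3) / 2) * Real.exp (-c * t))
      atTop (nhds (Real.sqrt Real.pi)))
    ∧ (Tendsto (fun c : ℝ => Real.sqrt c * kummerM (1 / 2) ((d : ℝ) / 2) c)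
        atTop (nhds (Real.Gamma ((d : ℝ) / 2) / Real.Gamma (((d : ℝ) - 1) / 2))))
    ∧ (∀ γ : ℝ, 0 < γ →
        Tendsto (fun r : ℝ => r * kummerM (1 / 2) ((d : ℝ) / 2) (γ * r ^ 2))
          atTop (nhds (Real.Gamma ((d : ℝ) / 2)
            / (Real.Gamma (((d : ℝ) - 1) / 2) * Real.sqrt γ)))) := by
  have hd' : (2 : ℝ) ≤ d := by exact_mod_cast hd
  have h := kummer_tail_asymptotics_general (a := 1 / 2) (b := d / 2) (by norm_num) (by linarith)
  have hα : (1 : ℝ) / 2 - 1 = -1 / 2 := by norm_num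
  have hβ : (d : ℝ) / 2 - 1 / 2 = (d - 1) / 2 := by ring
  have hβ' : ((d : ℝ) - 1) / 2 - 1 = (d - 3) / 2 := by ring
  simpa only [hα, hβ, hβ', Gamma_one_half_eq, ← sqrt_eq_rpow, mul_one_div_cancel (two_ne_zero' ℝ),
    rpow_one] using h
end
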